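/- arXiv:1403.5945 — 2 statements merged into one kernel-verified Lean document; each statement's English description precedes it below -/
import Mathlib

section
/- There is no set A = {0 = a₀ < a₁ < ⋯ < a₁₀} of 11 nonnegative integers with a₁₀ = 23 and A+A ⊇ [0,46]; equivalently, n₂*(10) < 46 while a nonrestricted basis of length 10 and range 46 exists. -/
open Pointwise

/-- `t` is a sum of two elements of the bitmask `U`, where `R` is the mask of all `46 - x`
with `x` in `U`. -/
def cov46 (U R t : ℕ) : Bool :=
  Nat.blt 0 (Nat.land (Nat.shiftRight R (Nat.sub 46 t)) U)

/-- Branch-and-prune search: `U` is the mask of still-possible elements, `R` its reversal,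
`c` the remaining budget. -/
def search46 : List (ℕ × ℕ) → ℕ → ℕ → ℕ → Bool
  | [], U, R, _ => (List.range 47).all fun t => cov46 U R t
  | (p, t) :: ps, U, R, c =>
    or (and (cov46 U R t) (match c with
      | 0 => false
      | c + 1 => search46 ps U R c))
    (and (cov46 (Nat.xor U (Nat.pow 2 p)) (Nat.xor R (Nat.pow 2 (Nat.sub 46 p))) t)
      (search46 ps (Nat.xor U (Nat.pow 2 p)) (Nat.xor R (Nat.pow 2 (Nat.sub 46 p))) c))

def order46 : List (ℕ × ℕ) :=
  (List.range 12).flatMap fun i => [(i, i), (23 - i, 46 - i)]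

theorem cov46_of {A : Finset ℕ} {U R t : ℕ} (hU : ∀ x ∈ A, U.testBit x = true)
    (hR : ∀ x ∈ A, R.testBit (46 - x) = true) (h46 : t ≤ 46)
    (ht : t ∈ A + A) : cov46 U R t = true := by
  obtain ⟨x, hx, y, hy, rfl⟩ := Finset.mem_add.1 ht
  have h : ((R >>> (46 - (x + y))) &&& U).testBit x = true := by
    rw [Nat.testBit_and, Nat.testBit_shiftRight, hU x hx,
      show 46 - (x + y) + x = 46 - y by omega, hR y hy]; rfl
  have h0 : 0 < (R >>> (46 - (x + y))) &&& U := by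
    rcases Nat.eq_zero_or_pos ((R >>> (46 - (x + y))) &&& U) with h1 | h1
    · rw [h1] at h; simp at h
    · exact h1
  exact Nat.ble_eq_true_of_le h0

theorem testBit46 {U p x : ℕ} (h : U.testBit x = true) (hne : p ≠ x) :
    (Nat.xor U (Nat.pow 2 p)).testBit x = true := by
  change (U ^^^ 2 ^ p).testBit x = true
  rw [Nat.testBit_xor, h, Nat.testBit_two_pow_of_ne hne]; rfl

theorem search46_sound {A : Finset ℕ} (hA : Finset.Icc 0 46 ⊆ A + A) (hA' : ∀ x ∈ A, x < 24) :
    ∀ (ps : List (ℕ × ℕ)) (U R c : ℕ), (∀ q ∈ ps, q.1 < 24 ∧ q.2 ≤ 46) →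
      (∀ x ∈ A, U.testBit x = true) → (∀ x ∈ A, R.testBit (46 - x) = true) →
      ps.countP (fun q => decide (q.1 ∈ A)) ≤ c → search46 ps U R c = true
  | [], U, R, c, _, hU, hR, _ => by
    simp only [search46, List.all_eq_true, List.mem_range]
    intro t ht
    exact cov46_of hU hR (by omega) (hA (by simp; omega))
  | (p, t) :: ps, U, R, c, hq, hU, hR, hc => by
    obtain ⟨hp24, ht46⟩ : p < 24 ∧ t ≤ 46 := hq (p, t) (by simp)
    have ht : t ∈ A + A := hA (by simpa using ht46)
    have hq' : ∀ q ∈ ps, q.1 < 24 ∧ q.2 ≤ 46 := fun q h => hq q (by simp [h])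
    rw [List.countP_cons] at hc
    by_cases hp : p ∈ A
    · simp only [hp, decide_true, if_true] at hc
      obtain ⟨c, rfl⟩ : ∃ d, c = d + 1 := ⟨c - 1, by omega⟩
      have h1 := search46_sound hA hA' ps U R c hq' hU hR (by omega)
      rw [search46, cov46_of hU hR ht46 ht]
      simp only [h1, Bool.and_self, Bool.true_or]
    · have hne : ∀ x ∈ A, p ≠ x := by rintro x hx rfl; exact hp hx
      have hU' : ∀ x ∈ A, (Nat.xor U (Nat.pow 2 p)).testBit x = true :=
        fun x hx => testBit46 (hU x hx) (hne x hx)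
      have hR' : ∀ x ∈ A,
          (Nat.xor R (Nat.pow 2 (Nat.sub 46 p))).testBit (46 - x) = true := by
        intro x hx
        refine testBit46 (hR x hx) ?_
        change 46 - p ≠ 46 - x
        have := hne x hx
        have := hA' x hx
        omega
      have h1 := search46_sound hA hA' ps _ _ c hq' hU' hR' (by simp [hp] at hc; exact hc)
      rw [search46.eq_def]
      simp only [h1, cov46_of hU' hR' ht46 ht, Bool.and_self, Bool.or_true]

theorem countP46 (l : List (ℕ × ℕ)) (hn : (l.map Prod.fst).Nodup) (A : Finset ℕ) :
    l.countP (fun q => decide (q.1 ∈ A)) ≤ A.card := by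
  have e : l.countP (fun q => decide (q.1 ∈ A)) =
      ((l.map Prod.fst).filter (fun x => decide (x ∈ A))).length := by
    rw [← List.countP_eq_length_filter, List.countP_map]; rfl
  rw [e, ← List.toFinset_card_of_nodup (hn.filter _)]
  refine Finset.card_le_card ?_
  intro x hx
  simpa using (List.mem_filter.1 (List.mem_toFinset.1 hx)).2

theorem order46_nodup : (order46.map Prod.fst).Nodup := by decide +kernel

theorem order46_le : ∀ q ∈ order46, q.1 < 24 ∧ q.2 ≤ 46 := by decide +kernel

theorem masks46 : ∀ x < 24, (16777215 : ℕ).testBit x = true ∧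
    (140737479966720 : ℕ).testBit (46 - x) = true := by decide +kernel

theorem search46_false : search46 order46 16777215 140737479966720 11 = false := by
  decide +kernel

theorem no_restricted_basis_length10_range46 :
    (¬ ∃ a : ℕ → ℕ, a 0 = 0 ∧ (∀ m < 10, a m < a (m + 1)) ∧ a 10 = 23 ∧
      Finset.Icc 0 46 ⊆
        ((Finset.range 11).image a) + ((Finset.range 11).image a)) ∧
    (∃ a : ℕ → ℕ, a 0 = 0 ∧ (∀ m < 10, a m < a (m + 1)) ∧ a 10 ≠ 23 ∧
      Finset.Icc 0 46 ⊆
        ((Finset.range 11).image a) + ((Finset.range 11).image a)) := by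
  constructor
  · rintro ⟨a, -, hmono, h10, hA⟩
    have hle : ∀ x ∈ (Finset.range 11).image a, x < 24 := by
      intro x hx
      obtain ⟨m, hm, rfl⟩ := Finset.mem_image.1 hx
      have hm := Finset.mem_range.1 hm
      have h := fun i (hi : i < 10) => hmono i hi
      have h0 := h 0; have h1 := h 1; have h2 := h 2; have h3 := h 3; have h4 := h 4
      have h5 := h 5; have h6 := h 6; have h7 := h 7; have h8 := h 8; have h9 := h 9
      norm_num at h0 h1 h2 h3 h4 h5 h6 h7 h8 h9
      interval_cases m <;> omega
    have hs := search46_sound hA hle order46 16777215 140737479966720 11 order46_le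
      (fun x hx => masks46 x (hle x hx) |>.1) (fun x hx => masks46 x (hle x hx) |>.2) 
      ((countP46 order46 order46_nodup _).trans (Finset.card_image_le.trans (by simp)))
    rw [search46_false] at hs
    exact Bool.false_ne_true hs
  · refine ⟨fun n => ([0, 1, 2, 3, 7, 11, 15, 19, 21, 22, 24] : List ℕ).getD n 0, ?_, ?_, ?_, ?_⟩ <;> decide +kernel
end

section
/- n₂*(10) = 44: there exists a set A = {0 = a₀ < ⋯ < a₁₀} with a₁₀ = 22 and A+A ⊇ [0,44], and no set {0 = a₀ < ⋯ < a₁₀} with a₁₀ = 23 satisfies A+A ⊇ [0,46]. -/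
open Pointwise

/-- Search for a mask of a basis; decides the elements in the order given by the list and, after
deciding `x`, checks that the sum `t` paired with it is already covered. -/
def searchBasis : List (ℕ × ℕ) → ℕ → ℕ → ℕ → Bool
  | [], _, s, _ => (List.range 47).all fun t => s.testBit t
  | (x, t) :: L, m, s, r =>
    ((Nat.blt 0 r && (s ||| ((m ||| (1 <<< x)) <<< x)).testBit t) &&
      searchBasis L (m ||| (1 <<< x)) (s ||| ((m ||| (1 <<< x)) <<< x)) (r - 1)) ||
    (s.testBit t && searchBasis L m s r)

/-- The order `L` is admissible when the elements of `D` are decided. -/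
def ValidOrder : List (ℕ × ℕ) → List ℕ → Prop
  | [], D => ∀ u ∈ List.range 24, u ∈ D
  | (x, t) :: L, D => x ∉ D ∧ t < 47 ∧
      (∀ u ∈ List.range 24, ∀ v ∈ List.range 24, u + v = t → u ∈ x :: D) ∧ ValidOrder L (x :: D)

instance decValidOrder : ∀ L D, Decidable (ValidOrder L D)
  | [], D => by unfold ValidOrder; infer_instance
  | (x, t) :: L, D => by
    have := decValidOrder L (x :: D)
    unfold ValidOrder; infer_instance

def theOrder : List (ℕ × ℕ) :=
  [(0, 0), (23, 46), (1, 1), (22, 45), (2, 2), (21, 44), (3, 3), (20, 43), (4, 4), (19, 42),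
   (5, 5), (18, 41), (6, 6), (17, 40), (7, 7), (16, 39), (8, 8), (15, 38), (9, 9), (14, 37),
   (10, 10), (13, 36), (11, 11), (12, 35)]

theorem validOrder_theOrder : ValidOrder theOrder [] := by decide +kernel

theorem searchBasis_theOrder : searchBasis theOrder 0 0 11 = false := by decide +kernel

theorem searchBasis_sound (A : Finset ℕ) (hA : ∀ x ∈ A, x < 24)
    (hcov : ∀ t < 47, ∃ x ∈ A, ∃ y ∈ A, x + y = t) :
    ∀ (L : List (ℕ × ℕ)) (D : List ℕ) (m s r : ℕ), ValidOrder L D →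
      (∀ x ∈ A, x ∈ D → m.testBit x = true) →
      (∀ x ∈ A, ∀ y ∈ A, x ∈ D → y ∈ D → s.testBit (x + y) = true) →
      (A.filter (fun x => x ∉ D)).card ≤ r → searchBasis L m s r = true := by
  intro L
  induction L with
  | nil =>
    intro D m s r hV hm hs hr
    simp only [searchBasis, List.all_eq_true, List.mem_range]
    intro t ht
    obtain ⟨x, hx, y, hy, rfl⟩ := hcov t ht
    exact hs x hx y hy (hV x (by simpa using hA x hx)) (hV y (by simpa using hA y hy))
  | cons p L ih =>
    obtain ⟨x, t⟩ := p
    intro D m s r hV hm hs hr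
    obtain ⟨hxD, ht, hcl, hV'⟩ := hV
    obtain ⟨u, hu, v, hv, huv⟩ := hcov t ht
    have hu' := hcl u (by simpa using hA u hu) v (by simpa using hA v hv) huv
    have hv' := hcl v (by simpa using hA v hv) u (by simpa using hA u hu) (by omega)
    simp only [searchBasis, Bool.or_eq_true, Bool.and_eq_true]
    by_cases hxA : x ∈ A
    · left
      have hm2 : ∀ z ∈ A, z ∈ x :: D → (m ||| (1 <<< x)).testBit z = true := by
        intro z hz hzD
        rcases List.mem_cons.1 hzD with rfl | h
        · simp [Nat.testBit_or, Nat.testBit_shiftLeft]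
        · simp [Nat.testBit_or, hm z hz h]
      have hs2 : ∀ y ∈ A, ∀ z ∈ A, y ∈ x :: D → z ∈ x :: D →
          (s ||| ((m ||| (1 <<< x)) <<< x)).testBit (y + z) = true := by
        intro y hy z hz hyD hzD
        rw [Nat.testBit_or, Bool.or_eq_true]
        rcases List.mem_cons.1 hyD with rfl | h
        · right
          rw [Nat.testBit_shiftLeft]
          simp [hm2 z hz hzD, -Nat.testBit_or]
        · rcases List.mem_cons.1 hzD with rfl | h'
          · right
            rw [Nat.testBit_shiftLeft]
            simp [hm2 y hy hyD, -Nat.testBit_or]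
          · left
            exact hs y hy z hz h h'
      have hlt : (A.filter (fun z => z ∉ x :: D)).card < (A.filter (fun z => z ∉ D)).card := by
        apply Finset.card_lt_card
        refine Finset.ssubset_iff_of_subset ?_ |>.2 ⟨x, by simp [hxA, hxD], by simp⟩
        intro z hz
        simp only [Finset.mem_filter, List.mem_cons, not_or] at hz ⊢
        exact ⟨hz.1, hz.2.2⟩
      refine ⟨⟨?_, ?_⟩, ih (x :: D) _ _ _ hV' hm2 hs2 (by omega)⟩
      · simp only [Nat.blt_eq]; omega
      · rw [← huv]; exact hs2 u hu v hv hu' hv'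
    · right
      have key : ∀ z ∈ A, z ∈ x :: D → z ∈ D := by
        intro z hz hzD
        rcases List.mem_cons.1 hzD with rfl | h
        · exact absurd hz hxA
        · exact h
      refine ⟨?_, ih (x :: D) _ _ _ hV' (fun z hz h => hm z hz (key z hz h))
        (fun y hy z hz h h' => hs y hy z hz (key y hy h) (key z hz h')) (le_trans ?_ hr)⟩
      · rw [← huv]; exact hs u hu v hv (key u hu hu') (key v hv hv')
      · apply Finset.card_le_card
        intro z hz
        simp only [Finset.mem_filter, List.mem_cons, not_or] at hz ⊢
        exact ⟨hz.1, hz.2.2⟩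

theorem no_cover (A : Finset ℕ) (hA : ∀ x ∈ A, x < 24) (hc : A.card ≤ 11)
    (hcov : Finset.Icc 0 46 ⊆ A + A) : False := by
  have hcov' : ∀ t < 47, ∃ x ∈ A, ∃ y ∈ A, x + y = t := by
    intro t ht
    have h1 : t ∈ Finset.Icc 0 46 := Finset.mem_Icc.2 ⟨Nat.zero_le t, Nat.le_of_lt_succ ht⟩
    exact Finset.mem_add.1 (hcov h1)
  have hr : (A.filter (fun x => x ∉ ([] : List ℕ))).card ≤ 11 :=
    le_trans (Finset.card_filter_le _ _) hc
  have h := searchBasis_sound A hA hcov' theOrder [] 0 0 11 validOrder_theOrder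
    (fun _ _ h => absurd h List.not_mem_nil) (fun _ _ _ _ h => absurd h List.not_mem_nil) hr
  exact Bool.false_ne_true (searchBasis_theOrder.symm.trans h)

theorem n2star_10_eq_44 :
    (∃ a : ℕ → ℕ, a 0 = 0 ∧ (∀ m < 10, a m < a (m + 1)) ∧ a 10 = 22 ∧
      Finset.Icc 0 44 ⊆
        ((Finset.range 11).image a) + ((Finset.range 11).image a)) ∧
    (¬ ∃ a : ℕ → ℕ, a 0 = 0 ∧ (∀ m < 10, a m < a (m + 1)) ∧ a 10 = 23 ∧
      Finset.Icc 0 46 ⊆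
        ((Finset.range 11).image a) + ((Finset.range 11).image a)) := by
  constructor
  · refine ⟨fun i => [0, 1, 2, 3, 7, 11, 15, 19, 20, 21, 22].getD i 0, ?_⟩
    decide +kernel
  · rintro ⟨a, -, hlt, h10, hcov⟩
    have hA : ∀ x ∈ (Finset.range 11).image a, x < 24 := by
      intro x hx
      obtain ⟨i, hi, rfl⟩ := Finset.mem_image.1 hx
      have hi := Finset.mem_range.1 hi
      have h0 := hlt 0; have h1 := hlt 1; have h2 := hlt 2; have h3 := hlt 3
      have h4 := hlt 4; have h5 := hlt 5; have h6 := hlt 6; have h7 := hlt 7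
      have h8 := hlt 8; have h9 := hlt 9
      norm_num at h0 h1 h2 h3 h4 h5 h6 h7 h8 h9
      interval_cases i <;> omega
    have hc : ((Finset.range 11).image a).card ≤ 11 := by
      simpa using Finset.card_image_le (s := Finset.range 11) (f := a)
    generalize (Finset.range 11).image a = A at hA hc hcov
    exact no_cover A hA hc hcov
end
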